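/- Let \(h_1, h_2 : L_0 \to \mathbb{Z}\) be two height functions such that \(n+1\) divides \(h_1(x) - h_2(x)\) for every \(x \in L_0\). Then \(h_{\min}(x) = \min(h_1(x), h_2(x))\) and \(h_{\max}(x) = \max(h_1(x), h_2(x))\) are height functions. -/

import Mathlib

open scoped Classical

noncomputable section

/-- Vertices of the universal cover quiver: the lattice `L₀ = ℤⁿ`. -/
abbrev V (n : ℕ) := Fin n → ℤ

/-- The vectors `α₁, …, αₙ` (standard basis) and `α_{n+1} = -∑ αᵢ`. -/
def alphav (n : ℕ) (i : Fin (n + 1)) : V n :=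
  if h : (i : ℕ) < n then Pi.single ⟨i, h⟩ 1 else fun _ => -1

/-- An arrow of `Q̂` is a pair (source, type): the arrow `x → x + αᵢ`. -/
abbrev Arrow (n : ℕ) := V n × Fin (n + 1)

/-- The list of arrows of the path starting at `x` with list of types `l`. -/
def pathArrows (n : ℕ) : V n → List (Fin (n + 1)) → List (Arrow n)
  | _, [] => []
  | x, i :: l => (x, i) :: pathArrows n (x + alphav n i) l

/-- An elementary cycle: length `n+1`, pairwise distinct types, closed. -/
def IsElemCycle (n : ℕ) (l : List (Fin (n + 1))) : Prop :=
  l.length = n + 1 ∧ l.Nodup ∧ (l.map (alphav n)).sum = 0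

/-- A cut: every elementary cycle passes through exactly one arrow of `C`. -/
def IsCut (n : ℕ) (C : Set (Arrow n)) : Prop :=
  ∀ (x : V n) (l : List (Fin (n + 1))), IsElemCycle n l →
    ∃! a : Arrow n, a ∈ pathArrows n x l ∧ a ∈ C

/-- Height increment of a single arrow. -/
def hInc (n : ℕ) (C : Set (Arrow n)) (a : Arrow n) : ℤ :=
  if a ∈ C then -(n : ℤ) else 1

/-- Height increment along the path from `x` with types `l`. -/
def pathH (n : ℕ) (C : Set (Arrow n)) (x : V n) (l : List (Fin (n + 1))) : ℤ :=
  ((pathArrows n x l).map (hInc n C)).sum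

/-- A height function. -/
def IsHeight (n : ℕ) (h : V n → ℤ) : Prop :=
  h 0 = 0 ∧ ∀ (x : V n) (i : Fin (n + 1)),
    h (x + alphav n i) = h x + 1 ∨ h (x + alphav n i) = h x - n

/-- The cut associated to a height function. -/
def cutOf (n : ℕ) (h : V n → ℤ) : Set (Arrow n) :=
  {a | h (a.1 + alphav n a.2) = h a.1 - n}

/-- `L₁`-periodicity of a set of arrows. -/
def IsPeriodic (n : ℕ) (L1 : AddSubgroup (V n)) (C : Set (Arrow n)) : Prop :=
  ∀ a : Arrow n, ∀ y ∈ L1, (a ∈ C ↔ (a.1 + y, a.2) ∈ C)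

/-- The type of a periodic cut: the number of `L₁`-orbits of cut arrows of type `i`. -/
def typeCount (n : ℕ) (L1 : AddSubgroup (V n)) (C : Set (Arrow n)) (i : Fin (n + 1)) : ℕ :=
  Nat.card ((QuotientAddGroup.mk (s := L1)) '' {x : V n | (x, i) ∈ C})

end

/-- pointwise min and max of two height functions whose difference is
divisible by `n+1` are again height functions. -/
theorem stmt_6 (n : ℕ) (hn : 1 ≤ n) (h₁ h₂ : V n → ℤ)
    (hh₁ : IsHeight n h₁) (hh₂ : IsHeight n h₂)
    (hdvd : ∀ x : V n, ((n : ℤ) + 1) ∣ (h₁ x - h₂ x)) :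
    IsHeight n (fun x => min (h₁ x) (h₂ x)) ∧
    IsHeight n (fun x => max (h₁ x) (h₂ x)) := by
  have key : ∀ x : V n, h₁ x = h₂ x ∨ (n : ℤ) + 1 ≤ h₁ x - h₂ x ∨ (n : ℤ) + 1 ≤ h₂ x - h₁ x := by
    intro x
    rcases lt_trichotomy (h₁ x) (h₂ x) with h | h | h
    · right; right
      exact Int.le_of_dvd (by omega) ((dvd_sub_comm).mp (hdvd x))
    · exact Or.inl h
    · right; left
      exact Int.le_of_dvd (by omega) (hdvd x)
  obtain ⟨z₁, s₁⟩ := hh₁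
  obtain ⟨z₂, s₂⟩ := hh₂
  refine ⟨⟨by simp [z₁, z₂], fun x i => ?_⟩, ⟨by simp [z₁, z₂], fun x i => ?_⟩⟩
  all_goals
    have k := key x
    have a := s₁ x i
    have b := s₂ x i
    dsimp only
    generalize h₁ (x + alphav n i) = p at *
    generalize h₂ (x + alphav n i) = q at *
    omega
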